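/- Let S_ω be the weight lattice of a simple complex Lie algebra g with Weyl group W, acted on (on the right) by W, and for a weight λ ∈ S_ω let Γ_λ = S_ω/(λ·Z[W]) be the quotient of S_ω by the sublattice generated by the W-orbit of λ. Then Γ_λ is the trivial group in each of the following cases (Bourbaki numbering of fundamental weights ϖ_i): (1) W = W(E_8) and λ = ϖ_8; (2) W = W(E_7) and λ = ϖ_7; (3) W = W(E_6) and λ = ϖ_1 or λ = ϖ_6; (4) W = W(D_n) with n odd and λ = ϖ_{n−1} or λ = ϖ_n; (5) W = W(A_n) and λ = ϖ_i with i coprime to n+1. -/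

import Mathlib

/-!
STATEMENT 17 (Lemma 5.4 / section 5.3).
The weight lattice `Sω` of a simple complex Lie algebra of rank `n` is identified with
`Fin n → ℤ` via the coordinates in the basis of fundamental weights `ϖ_i` (Bourbaki
numbering, shifted to be 0-indexed); `ϖ_i` is then `Pi.single i 1`.  With respect to
the Cartan matrix `C`, the simple reflection `s_i ∈ W` acts on the weight lattice by
`s_i(v) = v − ⟨v, α_i^∨⟩·α_i = v − v(i)·(C i)`, and the Weyl group `W` is generated by
the simple reflections; hence the `W`-orbit of a weight `lam` is the smallest set
containing `lam` and stable under all the `s_i`, and `Γ_λ = Sω/(lam·ℤ[W])` is trivial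
iff the subgroup generated by (any set containing) the orbit is all of `Sω`.
Claim: `Γ_λ` is trivial for
(1) `E₈` with `λ = ϖ₈`, (2) `E₇` with `λ = ϖ₇`, (3) `E₆` with `λ = ϖ₁` or `ϖ₆`,
(4) `D_n` (`n` odd) with `λ = ϖ_{n−1}` or `ϖ_n`, (5) `A_n` with `λ = ϖ_i`,
`gcd(i, n+1) = 1`.
-/

/-- The Cartan matrix of type `A_n` (simply-laced path graph), 0-indexed. -/
def cartanA (n : ℕ) : Fin n → Fin n → ℤ := fun i j =>
  if i = j then 2
  else if (i : ℕ) + 1 = (j : ℕ) ∨ (j : ℕ) + 1 = (i : ℕ) then -1 else 0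

/-- The Cartan matrix of type `D_n` in Bourbaki numbering (0-indexed): the nodes
`0, …, n−3` form a chain and the nodes `n−2`, `n−1` are both attached to `n−3`. -/
def cartanD (n : ℕ) : Fin n → Fin n → ℤ := fun i j =>
  if i = j then 2
  else if (max (i : ℕ) (j : ℕ) = min (i : ℕ) (j : ℕ) + 1 ∧ max (i : ℕ) (j : ℕ) ≤ n - 2)
        ∨ (min (i : ℕ) (j : ℕ) = n - 3 ∧ max (i : ℕ) (j : ℕ) = n - 1) then -1 else 0

/-- The adjacency list of the Dynkin diagrams `E₆ ⊂ E₇ ⊂ E₈` in Bourbaki numbering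
(0-indexed): node `1` (Bourbaki `α₂`) is attached to node `3` (Bourbaki `α₄`), and the
remaining nodes form the chain `0−2−3−4−5−6−7`. -/
def adjE : List (ℕ × ℕ) := [(0,2),(1,3),(2,3),(3,4),(4,5),(5,6),(6,7)]

/-- The Cartan matrix of type `E_n` (`n = 6,7,8`) in Bourbaki numbering, 0-indexed. -/
def cartanE (n : ℕ) : Fin n → Fin n → ℤ := fun i j =>
  if i = j then 2
  else if ((i : ℕ), (j : ℕ)) ∈ adjE ∨ ((j : ℕ), (i : ℕ)) ∈ adjE then -1 else 0

/-- The simple reflection `s_i` acting on the weight lattice `Fin n → ℤ` written in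
fundamental-weight coordinates: `s_i(v) = v − v(i)·α_i`, where `α_i = C i` is the
`i`-th simple root expressed in the basis of fundamental weights. -/
def simpleRefl {n : ℕ} (C : Fin n → Fin n → ℤ) (i : Fin n) (v : Fin n → ℤ) :
    Fin n → ℤ :=
  v - v i • C i

/-!
If `O` is stable under the simple reflections and contains `ϖ_i`, the subgroup it generates
contains `v - s_j v = v(j) α_j` for each of its elements `v`. It therefore contains `α_i`, and,
following the edges of the connected Dynkin diagram, every simple root. So it is enough that `ϖ_i`
generates the quotient of the weight lattice by the root lattice.

In that quotient the row of a node `k` reads `2 ϖ_k = ∑ ϖ_j`, the sum running over the neighbours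
of `k`. Hence along an arm the classes are the multiples `a, 2a, 3a, …` of the class `a` of its
leaf. For `A_n` the whole diagram is one arm and `(n + 1) a = 0`. The diagrams `D_n` and `E_n` are
stars with three arms of `p`, `q`, `r` nodes, the branch node being counted in each. If `x` is the
class at the branch node, its neighbours have the classes `x - a`, `x - b`, `x - c`, so the quotient
is `⟨a, b, c | p a = q b = r c = a + b + c⟩`. When `q` and `r` are coprime, setting `a = 0` leaves
`b + c = 0` and `q b = r c = 0`, hence `b = c = 0`: the leaf of the first arm generates.
-/

section FundamentalWeights

/-- The fundamental weight `ϖ_k` in Bourbaki's numbering, starting from `1`. By convention it is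
`0` for `k = 0` and for `n < k`, so that the ends of a diagram need no special treatment. -/
def fundWeight (n k : ℕ) : Fin n → ℤ := fun j => if (j : ℕ) + 1 = k then 1 else 0

theorem single_eq_fundWeight {n : ℕ} (i : Fin n) :
    Pi.single i (1 : ℤ) = fundWeight n (i + 1) := by
  ext j
  simp [Pi.single_apply, fundWeight, Fin.ext_iff]

theorem fundWeight_zero (n : ℕ) : fundWeight n 0 = 0 := by
  ext j
  simp [fundWeight]

theorem fundWeight_succ_self (n : ℕ) : fundWeight n (n + 1) = 0 := by
  ext j
  simp [fundWeight, j.isLt.ne]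

theorem hom_eq_zero_of_fundWeight {n : ℕ} {G : Type*} [AddCommGroup G] {φ : (Fin n → ℤ) →+ G}
    (h : ∀ k, 1 ≤ k → k ≤ n → φ (fundWeight n k) = 0) : φ = 0 := by
  refine AddMonoidHom.functions_ext' _ _ _ fun i => AddMonoidHom.ext_int ?_
  simpa [single_eq_fundWeight] using h (i + 1) (by omega) i.isLt

end FundamentalWeights

section Orbits

variable {n : ℕ} {C : Fin n → Fin n → ℤ} {O : Set (Fin n → ℤ)}

/-- Connectedness of the Dynkin diagram of a simply-laced Cartan matrix `C`, whose edges are the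
pairs with `C i j = -1`; equivalently, irreducibility of the root system. -/
def DynkinConnected (C : Fin n → Fin n → ℤ) : Prop :=
  ∀ i j, Relation.ReflTransGen (fun k l => C k l = -1) i j

theorem DynkinConnected.of_wellFounded (hC : ∀ i j, C i j = C j i)
    {s : Fin n → Fin n → Prop} (hs : WellFounded s) (root : Fin n)
    (hparent : ∀ i ≠ root, ∃ j, s j i ∧ C j i = -1) : DynkinConnected C := by
  have from_root (i : Fin n) : Relation.ReflTransGen (fun k l => C k l = -1) root i := by
    induction i using hs.induction with
    | _ i ih =>
      by_cases hi : i = root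
      · rw [hi]
      · obtain ⟨j, hji, hadj⟩ := hparent i hi
        exact (ih j hji).tail hadj
  have : Std.Symm fun k l => C k l = -1 := ⟨fun k l h => (hC l k).trans h⟩
  exact fun i j => (symm (from_root i)).trans (from_root j)

theorem smul_simpleRoot_mem_closure {i : Fin n} (hO : ∀ v ∈ O, simpleRefl C i v ∈ O)
    {v : Fin n → ℤ} (hv : v ∈ AddSubgroup.closure O) : v i • C i ∈ AddSubgroup.closure O := by
  let smulRoot : (Fin n → ℤ) →+ (Fin n → ℤ) :=
    (zmultiplesHom _ (C i)).comp (Pi.evalAddMonoidHom _ i)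
  suffices AddSubgroup.closure O ≤ (AddSubgroup.closure O).comap smulRoot from this hv
  refine (AddSubgroup.closure_le _).2 fun w hw => ?_
  have hdiff : w - simpleRefl C i w ∈ AddSubgroup.closure O :=
    sub_mem (AddSubgroup.subset_closure hw) (AddSubgroup.subset_closure (hO w hw))
  rwa [simpleRefl, sub_sub_cancel] at hdiff

theorem simpleRoot_mem_closure (hC : DynkinConnected C)
    (hO : ∀ i, ∀ v ∈ O, simpleRefl C i v ∈ O) {i : Fin n} (hi : Pi.single i (1 : ℤ) ∈ O)
    (j : Fin n) : C j ∈ AddSubgroup.closure O := by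
  induction hC i j with
  | refl => simpa using smul_simpleRoot_mem_closure (hO i) (AddSubgroup.subset_closure hi)
  | @tail k l _ hkl ih => simpa [hkl] using smul_simpleRoot_mem_closure (hO l) ih

theorem closure_eq_top_of_forall_hom_eq_zero (hC : DynkinConnected C) {i : Fin n}
    (hgen : ∀ (G : Type) [AddCommGroup G] (φ : (Fin n → ℤ) →+ G),
      (∀ j, φ (C j) = 0) → φ (fundWeight n (i + 1)) = 0 → φ = 0)
    (hi : Pi.single i (1 : ℤ) ∈ O) (hO : ∀ i, ∀ v ∈ O, simpleRefl C i v ∈ O) :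
    AddSubgroup.closure O = ⊤ := by
  have hmk : QuotientAddGroup.mk' (AddSubgroup.closure O) = 0 :=
    hgen _ _
      (fun j => (QuotientAddGroup.eq_zero_iff _).2 (simpleRoot_mem_closure hC hO hi j))
      ((QuotientAddGroup.eq_zero_iff _).2
        (AddSubgroup.subset_closure (single_eq_fundWeight i ▸ hi)))
  rw [← QuotientAddGroup.ker_mk' (AddSubgroup.closure O), hmk, AddMonoidHom.ker_zero]

end Orbits

section Arms

variable {G : Type*} [AddCommGroup G]

theorem eq_nsmul_of_add_eq_two_nsmul {f : ℕ → G} {m : ℕ} (h0 : f 0 = 0)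
    (h : ∀ k < m, f k + f (k + 2) = 2 • f (k + 1)) (k : ℕ) (hk : k ≤ m + 1) :
    f k = k • f 1 := by
  induction k using Nat.twoStepInduction with
  | zero => simp [h0]
  | one => simp
  | more k ih ih' =>
    have step := h k (by omega)
    rw [ih (by omega), ih' (by omega)] at step
    linear_combination (norm := module) step

theorem eq_zero_of_coprime_nsmul {q r : ℕ} (hqr : q.Coprime r) {a : G} (hq : q • a = 0)
    (hr : r • a = 0) : a = 0 := by
  simpa [hqr.gcd_eq_one] using gcd_nsmul_eq_zero.2 ⟨hq, hr⟩

theorem star_leaves_eq_zero {p q r : ℕ} (hqr : q.Coprime r) {a b c x : G}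
    (hpa : p • a = x) (hqb : q • b = x) (hrc : r • c = x) (hsum : a + b + c = x) (ha : a = 0) :
    b = 0 ∧ c = 0 := by
  subst ha
  obtain rfl : 0 = x := by simpa using hpa
  have hc : c = -b := by linear_combination (norm := module) hsum
  have hb : b = 0 := eq_zero_of_coprime_nsmul hqr hqb (by simpa [hc] using hrc)
  exact ⟨hb, by simp [hc, hb]⟩

end Arms

section TypeA

variable {n : ℕ}

theorem cartanA_dynkinConnected (n : ℕ) : DynkinConnected (cartanA n) := by
  intro i
  refine DynkinConnected.of_wellFounded (fun j k => ?_) wellFounded_lt ⟨0, i.pos⟩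
    (fun j hj => ?_) i
  · simp only [cartanA, eq_comm, or_comm]
  · have hpos : 0 < (j : ℕ) := Nat.pos_of_ne_zero fun h => hj (Fin.ext h)
    refine ⟨⟨j - 1, by omega⟩, Fin.lt_def.2 (by simp only; omega), ?_⟩
    simp only [cartanA, Fin.ext_iff]
    split_ifs <;> omega

theorem cartanA_eq_fundWeight (j : Fin n) :
    cartanA n j = 2 • fundWeight n (j + 1) - fundWeight n j - fundWeight n (j + 2) := by
  ext k
  simp only [cartanA, fundWeight, Pi.sub_apply, two_nsmul, Pi.add_apply, Fin.ext_iff]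
  split_ifs <;> omega

theorem hom_eq_zero_of_cartanA {G : Type*} [AddCommGroup G] {φ : (Fin n → ℤ) →+ G}
    (hroot : ∀ j, φ (cartanA n j) = 0) {i : ℕ} (hin : i ≤ n) (hcop : i.Coprime (n + 1))
    (hi : φ (fundWeight n i) = 0) : φ = 0 := by
  have multiple : ∀ k ≤ n + 1, φ (fundWeight n k) = k • φ (fundWeight n 1) := by
    refine eq_nsmul_of_add_eq_two_nsmul (by simp [fundWeight_zero]) fun k hk => ?_
    have row := hroot ⟨k, hk⟩
    simp only [cartanA_eq_fundWeight, map_sub, map_nsmul] at row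
    linear_combination (norm := module) -row
  have leaf : φ (fundWeight n 1) = 0 := by
    refine eq_zero_of_coprime_nsmul hcop ?_ ?_
    · rw [← multiple i (by omega), hi]
    · rw [← multiple (n + 1) le_rfl, fundWeight_succ_self, map_zero]
  exact hom_eq_zero_of_fundWeight fun k _ hk => by rw [multiple k (by omega), leaf, smul_zero]

end TypeA

section TypeD

variable {m : ℕ}

theorem cartanD_dynkinConnected {n : ℕ} (hn : 3 ≤ n) : DynkinConnected (cartanD n) := by
  refine DynkinConnected.of_wellFounded (fun j k => ?_) wellFounded_lt ⟨0, by omega⟩ fun j hj => ?_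
  · simp only [cartanD, eq_comm, max_comm, min_comm]
  · have hpos : 0 < (j : ℕ) := Nat.pos_of_ne_zero fun h => hj (Fin.ext h)
    let parent : ℕ := if (j : ℕ) = n - 1 then n - 3 else j - 1
    have hparent : parent < j := by grind
    refine ⟨⟨parent, by omega⟩, hparent, ?_⟩
    simp only [cartanD, Fin.ext_iff, parent]
    split_ifs <;> omega

theorem cartanD_eq_fundWeight_of_lt {j : Fin (m + 3)} (hj : (j : ℕ) < m) :
    cartanD (m + 3) j =
      2 • fundWeight (m + 3) (j + 1) - fundWeight (m + 3) j - fundWeight (m + 3) (j + 2) := by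
  ext k
  simp only [cartanD, fundWeight, Pi.sub_apply, two_nsmul, Pi.add_apply, Fin.ext_iff]
  split_ifs <;> omega

theorem cartanD_branch_eq_fundWeight :
    cartanD (m + 3) ⟨m, by omega⟩ = 2 • fundWeight (m + 3) (m + 1) - fundWeight (m + 3) m
      - fundWeight (m + 3) (m + 2) - fundWeight (m + 3) (m + 3) := by
  ext k
  simp only [cartanD, fundWeight, Pi.sub_apply, two_nsmul, Pi.add_apply, Fin.ext_iff]
  split_ifs <;> omega

theorem cartanD_leaf_eq_fundWeight {j : Fin (m + 3)} (hj : m < j) :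
    cartanD (m + 3) j = 2 • fundWeight (m + 3) (j + 1) - fundWeight (m + 3) (m + 1) := by
  ext k
  simp only [cartanD, fundWeight, Pi.sub_apply, two_nsmul, Pi.add_apply, Fin.ext_iff]
  split_ifs <;> omega

variable {G : Type*} [AddCommGroup G] {φ : (Fin (m + 3) → ℤ) →+ G}

theorem cartanD_map_long_arm_eq_nsmul (hroot : ∀ j, φ (cartanD (m + 3) j) = 0) :
    ∀ k ≤ m + 1, φ (fundWeight (m + 3) k) = k • φ (fundWeight (m + 3) 1) := by
  refine eq_nsmul_of_add_eq_two_nsmul (by simp [fundWeight_zero]) fun k hk => ?_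
  have row := hroot ⟨k, by omega⟩
  rw [cartanD_eq_fundWeight_of_lt hk] at row
  simp only [map_sub, map_nsmul] at row
  linear_combination (norm := module) -row

theorem cartanD_two_nsmul_map_leaf (hroot : ∀ j, φ (cartanD (m + 3) j) = 0) {k : ℕ} (hk : m + 2 ≤ k)
    (hk' : k ≤ m + 3) : 2 • φ (fundWeight (m + 3) k) = φ (fundWeight (m + 3) (m + 1)) := by
  obtain ⟨j, rfl⟩ : ∃ j, k = j + 1 := ⟨k - 1, by omega⟩
  have row := hroot ⟨j, by omega⟩
  rw [cartanD_leaf_eq_fundWeight (by simp only; omega)] at row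
  simpa only [map_sub, map_nsmul, sub_eq_zero] using row

theorem cartanD_map_sum_leaves (hroot : ∀ j, φ (cartanD (m + 3) j) = 0) :
    φ (fundWeight (m + 3) 1) + φ (fundWeight (m + 3) (m + 2)) + φ (fundWeight (m + 3) (m + 3))
      = φ (fundWeight (m + 3) (m + 1)) := by
  have branch := hroot ⟨m, by omega⟩
  rw [cartanD_branch_eq_fundWeight] at branch
  simp only [map_sub, map_nsmul] at branch
  have before_branch := cartanD_map_long_arm_eq_nsmul hroot m (by omega)
  have at_branch := cartanD_map_long_arm_eq_nsmul hroot (m + 1) le_rfl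
  have left := cartanD_two_nsmul_map_leaf hroot (k := m + 2) le_rfl (by omega)
  have right := cartanD_two_nsmul_map_leaf hroot (k := m + 3) (by omega) le_rfl
  linear_combination (norm := module) left + right + branch + before_branch - at_branch

theorem hom_eq_zero_of_cartanD_leaves (hroot : ∀ j, φ (cartanD (m + 3) j) = 0)
    (h1 : φ (fundWeight (m + 3) 1) = 0) (hleft : φ (fundWeight (m + 3) (m + 2)) = 0)
    (hright : φ (fundWeight (m + 3) (m + 3)) = 0) : φ = 0 := by
  refine hom_eq_zero_of_fundWeight fun k _ hk => ?_
  obtain hk | rfl | rfl : k ≤ m + 1 ∨ k = m + 2 ∨ k = m + 3 := by omega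
  · rw [cartanD_map_long_arm_eq_nsmul hroot k hk, h1, smul_zero]
  · exact hleft
  · exact hright

theorem hom_eq_zero_of_cartanD {n : ℕ} {φ : (Fin n → ℤ) →+ G} (hodd : Odd n) (hn : 3 ≤ n) {k : ℕ}
    (hk : k = n - 1 ∨ k = n) (hroot : ∀ j, φ (cartanD n j) = 0)
    (hspin : φ (fundWeight n k) = 0) : φ = 0 := by
  obtain ⟨m, rfl⟩ : ∃ m, n = m + 3 := ⟨n - 3, by omega⟩
  have hcop : (m + 1).Coprime 2 := by
    rw [Nat.coprime_two_right]
    grind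
  have long := (cartanD_map_long_arm_eq_nsmul hroot (m + 1) le_rfl).symm
  have left := cartanD_two_nsmul_map_leaf hroot (k := m + 2) le_rfl (by omega)
  have right := cartanD_two_nsmul_map_leaf hroot (k := m + 3) (by omega) le_rfl
  have hsum := cartanD_map_sum_leaves hroot
  obtain rfl | rfl := hk
  · obtain ⟨h1, hright⟩ := star_leaves_eq_zero hcop left long right (by rw [← hsum]; abel) hspin
    exact hom_eq_zero_of_cartanD_leaves hroot h1 hspin hright
  · obtain ⟨h1, hleft⟩ := star_leaves_eq_zero hcop right long left (by rw [← hsum]; abel) hspin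
    exact hom_eq_zero_of_cartanD_leaves hroot h1 hleft hspin

end TypeD

section TypeE

variable {n : ℕ}

theorem cartanE_dynkinConnected (hn4 : 4 ≤ n) (hn8 : n ≤ 8) : DynkinConnected (cartanE n) := by
  refine DynkinConnected.of_wellFounded (fun j k => ?_) wellFounded_gt ⟨n - 1, by omega⟩ ?_
  · simp only [cartanE, eq_comm, or_comm]
  · interval_cases n <;> decide +revert

theorem cartanE_zero_eq_fundWeight (hn : 0 < n) :
    cartanE n ⟨0, hn⟩ = 2 • fundWeight n 1 - fundWeight n 3 := by
  ext k
  simp only [cartanE, adjE, fundWeight, Pi.sub_apply, two_nsmul, Pi.add_apply]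
  grind (splits := 20)

theorem cartanE_one_eq_fundWeight (hn : 1 < n) :
    cartanE n ⟨1, hn⟩ = 2 • fundWeight n 2 - fundWeight n 4 := by
  ext k
  simp only [cartanE, adjE, fundWeight, Pi.sub_apply, two_nsmul, Pi.add_apply]
  grind (splits := 20)

theorem cartanE_two_eq_fundWeight (hn : 2 < n) :
    cartanE n ⟨2, hn⟩ = 2 • fundWeight n 3 - fundWeight n 1 - fundWeight n 4 := by
  ext k
  simp only [cartanE, adjE, fundWeight, Pi.sub_apply, two_nsmul, Pi.add_apply]
  grind (splits := 20)

theorem cartanE_branch_eq_fundWeight (hn : 3 < n) :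
    cartanE n ⟨3, hn⟩ =
      2 • fundWeight n 4 - fundWeight n 2 - fundWeight n 3 - fundWeight n 5 := by
  ext k
  simp only [cartanE, adjE, fundWeight, Pi.sub_apply, two_nsmul, Pi.add_apply]
  grind (splits := 20)

theorem cartanE_eq_fundWeight_of_le (hn8 : n ≤ 8) {j : Fin n} (hj : 4 ≤ (j : ℕ)) :
    cartanE n j = 2 • fundWeight n (j + 1) - fundWeight n j - fundWeight n (j + 2) := by
  revert j
  interval_cases n <;> decide +revert

variable {G : Type*} [AddCommGroup G] {φ : (Fin n → ℤ) →+ G}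

theorem cartanE_two_nsmul_map_one (hn : 0 < n) (hroot : ∀ j, φ (cartanE n j) = 0) :
    2 • φ (fundWeight n 1) = φ (fundWeight n 3) := by
  have row := hroot ⟨0, hn⟩
  simpa only [cartanE_zero_eq_fundWeight hn, map_sub, map_nsmul, sub_eq_zero] using row

theorem cartanE_three_nsmul_map_one (hn : 2 < n) (hroot : ∀ j, φ (cartanE n j) = 0) :
    3 • φ (fundWeight n 1) = φ (fundWeight n 4) := by
  have row := hroot ⟨2, hn⟩
  simp only [cartanE_two_eq_fundWeight hn, map_sub, map_nsmul] at row
  have two_nsmul_leaf := cartanE_two_nsmul_map_one (by omega) hroot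
  linear_combination (norm := module) row + 2 • two_nsmul_leaf

theorem cartanE_two_nsmul_map_two (hn : 1 < n) (hroot : ∀ j, φ (cartanE n j) = 0) :
    2 • φ (fundWeight n 2) = φ (fundWeight n 4) := by
  have row := hroot ⟨1, hn⟩
  simpa only [cartanE_one_eq_fundWeight hn, map_sub, map_nsmul, sub_eq_zero] using row

theorem cartanE_map_long_arm_eq_nsmul (hn8 : n ≤ 8) (hroot : ∀ j, φ (cartanE n j) = 0) :
    ∀ k ≤ n - 3, φ (fundWeight n (n + 1 - k)) = k • φ (fundWeight n n) := by
  intro k hk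
  refine eq_nsmul_of_add_eq_two_nsmul (f := fun k => φ (fundWeight n (n + 1 - k))) (m := n - 4)
    (by simp [fundWeight_succ_self]) (fun k hk => ?_) k (by omega)
  obtain ⟨j, rfl⟩ : ∃ j, n = k + j + 1 := ⟨n - k - 1, by omega⟩
  have row := hroot ⟨j, by omega⟩
  rw [cartanE_eq_fundWeight_of_le hn8 (by simp only; omega)] at row
  simp only [map_sub, map_nsmul] at row
  rw [show k + j + 1 + 1 - k = j + 2 by omega, show k + j + 1 + 1 - (k + 2) = j by omega,
    show k + j + 1 + 1 - (k + 1) = j + 1 by omega]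
  linear_combination (norm := module) -row

theorem cartanE_map_sum_leaves (hn4 : 4 ≤ n) (hn8 : n ≤ 8) (hroot : ∀ j, φ (cartanE n j) = 0) :
    φ (fundWeight n 1) + φ (fundWeight n 2) + φ (fundWeight n n) = φ (fundWeight n 4) := by
  have branch := hroot ⟨3, by omega⟩
  simp only [cartanE_branch_eq_fundWeight hn4, map_sub, map_nsmul] at branch
  have before_branch₁ := cartanE_two_nsmul_map_one (by omega) hroot
  have at_branch₁ := cartanE_three_nsmul_map_one (by omega) hroot
  have at_branch₂ := cartanE_two_nsmul_map_two (by omega) hroot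
  obtain ⟨m, rfl⟩ : ∃ m, n = m + 4 := ⟨n - 4, by omega⟩
  have before_branch₃ := cartanE_map_long_arm_eq_nsmul hn8 hroot m (by omega)
  have at_branch₃ := cartanE_map_long_arm_eq_nsmul hn8 hroot (m + 1) (by omega)
  rw [show m + 4 + 1 - m = 5 by omega] at before_branch₃
  rw [show m + 4 + 1 - (m + 1) = 4 by omega] at at_branch₃
  linear_combination (norm := module)
    branch - before_branch₁ + at_branch₁ + at_branch₂ + before_branch₃ - at_branch₃

theorem hom_eq_zero_of_cartanE_leaves (hn4 : 4 ≤ n) (hn8 : n ≤ 8)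
    (hroot : ∀ j, φ (cartanE n j) = 0) (h1 : φ (fundWeight n 1) = 0)
    (h2 : φ (fundWeight n 2) = 0) (hn : φ (fundWeight n n) = 0) : φ = 0 := by
  refine hom_eq_zero_of_fundWeight fun k hk1 hkn => ?_
  obtain rfl | rfl | rfl | hk : k = 1 ∨ k = 2 ∨ k = 3 ∨ 4 ≤ k := by omega
  · exact h1
  · exact h2
  · rw [← cartanE_two_nsmul_map_one (by omega) hroot, h1, smul_zero]
  · have multiple := cartanE_map_long_arm_eq_nsmul hn8 hroot (n + 1 - k) (by omega)
    rwa [Nat.sub_sub_self (by omega), hn, smul_zero] at multiple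

theorem hom_eq_zero_of_cartanE_last (hn4 : 4 ≤ n) (hn8 : n ≤ 8)
    (hroot : ∀ j, φ (cartanE n j) = 0) (hlast : φ (fundWeight n n) = 0) : φ = 0 := by
  have long := cartanE_map_long_arm_eq_nsmul hn8 hroot (n - 3) le_rfl
  rw [show n + 1 - (n - 3) = 4 by omega] at long
  obtain ⟨h1, h2⟩ := star_leaves_eq_zero (by decide : Nat.Coprime 3 2) long.symm
    (cartanE_three_nsmul_map_one (by omega) hroot) (cartanE_two_nsmul_map_two (by omega) hroot)
    (by rw [← cartanE_map_sum_leaves hn4 hn8 hroot]; abel) hlast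
  exact hom_eq_zero_of_cartanE_leaves hn4 hn8 hroot h1 h2 hlast

theorem hom_eq_zero_of_cartanE_first (hn4 : 4 ≤ n) (hn8 : n ≤ 8) (hcop : Nat.Coprime 2 (n - 3))
    (hroot : ∀ j, φ (cartanE n j) = 0) (hfirst : φ (fundWeight n 1) = 0) : φ = 0 := by
  have long := cartanE_map_long_arm_eq_nsmul hn8 hroot (n - 3) le_rfl
  rw [show n + 1 - (n - 3) = 4 by omega] at long
  obtain ⟨h2, hlast⟩ := star_leaves_eq_zero hcop (cartanE_three_nsmul_map_one (by omega) hroot)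
    (cartanE_two_nsmul_map_two (by omega) hroot) long.symm
    (cartanE_map_sum_leaves hn4 hn8 hroot) hfirst
  exact hom_eq_zero_of_cartanE_leaves hn4 hn8 hroot hfirst h2 hlast

end TypeE

theorem stmt_17 :
    -- (1) W(E₈), λ = ϖ₈
    (∀ O : Set (Fin 8 → ℤ), Pi.single (7 : Fin 8) (1 : ℤ) ∈ O →
      (∀ (i : Fin 8), ∀ v ∈ O, simpleRefl (cartanE 8) i v ∈ O) →
      AddSubgroup.closure O = ⊤) ∧
    -- (2) W(E₇), λ = ϖ₇
    (∀ O : Set (Fin 7 → ℤ), Pi.single (6 : Fin 7) (1 : ℤ) ∈ O →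
      (∀ (i : Fin 7), ∀ v ∈ O, simpleRefl (cartanE 7) i v ∈ O) →
      AddSubgroup.closure O = ⊤) ∧
    -- (3) W(E₆), λ = ϖ₁ or λ = ϖ₆
    (∀ lam : Fin 6 → ℤ,
      (lam = Pi.single (0 : Fin 6) (1 : ℤ) ∨ lam = Pi.single (5 : Fin 6) (1 : ℤ)) →
      ∀ O : Set (Fin 6 → ℤ), lam ∈ O →
      (∀ (i : Fin 6), ∀ v ∈ O, simpleRefl (cartanE 6) i v ∈ O) →
      AddSubgroup.closure O = ⊤) ∧
    -- (4) W(D_n), n odd, λ = ϖ_{n−1} or λ = ϖ_n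
    (∀ n : ℕ, Odd n → ∀ hn : 3 ≤ n,
      ∀ lam : Fin n → ℤ,
      (lam = Pi.single (⟨n - 2, by omega⟩ : Fin n) (1 : ℤ) ∨
        lam = Pi.single (⟨n - 1, by omega⟩ : Fin n) (1 : ℤ)) →
      ∀ O : Set (Fin n → ℤ), lam ∈ O →
      (∀ (i : Fin n), ∀ v ∈ O, simpleRefl (cartanD n) i v ∈ O) →
      AddSubgroup.closure O = ⊤) ∧
    -- (5) W(A_n), λ = ϖ_i with i coprime to n+1
    (∀ (n : ℕ) (i : Fin n), Nat.Coprime ((i : ℕ) + 1) (n + 1) →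
      ∀ O : Set (Fin n → ℤ), Pi.single i (1 : ℤ) ∈ O →
      (∀ (j : Fin n), ∀ v ∈ O, simpleRefl (cartanA n) j v ∈ O) →
      AddSubgroup.closure O = ⊤) := by
  refine ⟨fun O => ?_, fun O => ?_, ?_, fun n hodd hn => ?_, fun n i hcop O => ?_⟩
  · exact closure_eq_top_of_forall_hom_eq_zero (cartanE_dynkinConnected (by decide) le_rfl)
      fun _ _ _ => hom_eq_zero_of_cartanE_last (by decide) le_rfl
  · exact closure_eq_top_of_forall_hom_eq_zero (cartanE_dynkinConnected (by decide) (by decide))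
      fun _ _ _ => hom_eq_zero_of_cartanE_last (by decide) (by decide)
  · have hE6 := cartanE_dynkinConnected (n := 6) (by decide) (by decide)
    rintro lam (rfl | rfl) O
    · exact closure_eq_top_of_forall_hom_eq_zero hE6
        fun _ _ _ => hom_eq_zero_of_cartanE_first (by decide) (by decide) (by decide)
    · exact closure_eq_top_of_forall_hom_eq_zero hE6
        fun _ _ _ => hom_eq_zero_of_cartanE_last (by decide) (by decide)
  · have hD := cartanD_dynkinConnected hn
    rintro lam (rfl | rfl) O
    · exact closure_eq_top_of_forall_hom_eq_zero hD
        fun _ _ _ => hom_eq_zero_of_cartanD hodd hn (.inl (by simp only; omega))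
    · exact closure_eq_top_of_forall_hom_eq_zero hD
        fun _ _ _ => hom_eq_zero_of_cartanD hodd hn (.inr (by simp only; omega))
  · exact closure_eq_top_of_forall_hom_eq_zero (cartanA_dynkinConnected n)
      fun _ _ _ hroot => hom_eq_zero_of_cartanA hroot i.isLt hcop
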